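/- (Lions-type concentration-compactness lemma in the product space.) Let m, n be integers with m ≥ 1 and n ≥ 2m, and let Ω ⊂ ℝ^n be a bounded open set. Let (u_k), (v_k) be sequences in C_c^∞(Ω) with ∫_Ω |∇^m u_k|^{n/m} dx + ∫_Ω |∇^m v_k|^{n/m} dx = 1 for all k, and let u, v ∈ C_c^∞(Ω) with (u,v) ≢ (0,0) be such that u_k → u and v_k → v pointwise almost everywhere on Ω and lim_{k→∞} (∫_Ω |∇^m (u_k − u)|^{n/m} dx + ∫_Ω |∇^m (v_k − v)|^{n/m} dx) = 1 − (∫_Ω |∇^m u|^{n/m} dx + ∫_Ω |∇^m v|^{n/m} dx). Then for every p > 0 satisfying p · (1 − ∫_Ω |∇^m u|^{n/m} dx − ∫_Ω |∇^m v|^{n/m} dx)^{m/(n−m)} < ζ_{n,m} / 2^{(n−2m)/(n−m)}, one has sup_{k} ∫_Ω exp(p (|u_k(x)|^{n/(n−m)} + |v_k(x)|^{n/(n−m)})) dx < ∞. -/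

import Mathlib

/-!
The hypothesis on `p` is a strict inequality, so a uniform *subcritical* Adams inequality is enough,
and it is applied to the differences `w = U k - u`, `z = V k - v`.

* Representation. Integrating by parts against `‖y‖ ^ s` and using the divergence identity for the
  field `‖y‖ ^ (κ - n) y` expresses `g 0` through `Δ ^ j g`, or through its gradient. This yields
  `repConst n m * |g x| ≤ ∫ ‖y - x‖ ^ (m - n) |∇^m g y| dy` (`rep_bound`), and
  `adamsConst n m = n / ω_{n-1} * repConst n m ^ (n / (n - m))` (`adamsConst_eq`).
* Riesz potentials (`potential_exp`). If `∫ f ^ (n / a) ≤ 1`, split the potential of order `a` of `f`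
  at radius `ε` around `x`. Hölder's inequality bounds the far part by
  `(ω_{n-1} log (R / ε)) ^ ((n - a) / n)`, and the near part is at most `ε ^ σ * (k ⋆ f) x` for a
  kernel `k` which is still integrable. Choosing `ε ^ σ = R ^ σ / (1 + (k ⋆ f) x)` bounds
  `exp (β |W x| ^ (n / (n - a)))` by a constant times `(1 + (k ⋆ f) x) ^ (n / a)` as soon as
  `β ω_{n-1} < n`, and the latter is integrable on a bounded set by Young's inequality. Taking `a = m`
  gives the subcritical Adams inequality `adams_sub`.
* Product space. Put `q = n / (n - m)`, `θ = m / (n - m)`, and let `L` be the limit in the hypothesis.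
  Since `|U k| ^ q ≤ K |w| ^ q + D |u| ^ q` with `K` close to `1` (`pow_split`), and `u`, `v` are
  bounded, only `|w| ^ q + |z| ^ q` matters. If `a`, `b` slightly exceed the energies of `w`, `z`, then
  eventually `a + b ≤ T` with `T` close to `L`, and
  `|w| ^ q + |z| ^ q ≤ (a ^ θ + b ^ θ) max (|w| ^ q / a ^ θ) (|z| ^ q / b ^ θ)`, while concavity gives
  `a ^ θ + b ^ θ ≤ 2 ^ (1 - θ) T ^ θ`. This is where the constant `2 ^ ((n - 2 m) / (n - m))` comes
  from. The exponential of a maximum is at most the sum of the exponentials, so `adams_sub` applies to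
  each component. The remaining finitely many indices contribute finite integrals.
-/

open MeasureTheory Real

noncomputable section

/-- The Laplacian of `f : ℝⁿ → ℝ`, as the sum of the second partial derivatives. -/
def lap (n : ℕ) (f : EuclideanSpace ℝ (Fin n) → ℝ) : EuclideanSpace ℝ (Fin n) → ℝ :=
  fun x => ∑ i : Fin n,
    iteratedFDeriv ℝ 2 f x ![EuclideanSpace.single i 1, EuclideanSpace.single i 1]

/-- The (pointwise Euclidean norm of the) `m`-th order gradient `|∇^m u|(x)`:
`‖∇ (Δ^{(m-1)/2} u)(x)‖` when `m` is odd, and `|Δ^{m/2} u (x)|` when `m` is even. -/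
def mGradNorm (n m : ℕ) (u : EuclideanSpace ℝ (Fin n) → ℝ)
    (x : EuclideanSpace ℝ (Fin n)) : ℝ :=
  if m % 2 = 1 then ‖gradient ((lap n)^[(m - 1) / 2] u) x‖
  else |((lap n)^[m / 2] u) x|

/-- `ω_{n-1}`, the surface area of the unit sphere `S^{n-1} ⊂ ℝⁿ`. -/
def sphereArea (n : ℕ) : ℝ := 2 * Real.pi ^ ((n : ℝ) / 2) / Real.Gamma ((n : ℝ) / 2)

/-- The Adams constant `ζ_{n,m}`. -/
def adamsConst (n m : ℕ) : ℝ :=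
  if m % 2 = 1 then
    ((n : ℝ) / sphereArea n) *
      (Real.pi ^ ((n : ℝ) / 2) * (2 : ℝ) ^ (m : ℝ) * Real.Gamma (((m : ℝ) + 1) / 2) /
        Real.Gamma (((n : ℝ) - (m : ℝ) + 1) / 2)) ^ ((n : ℝ) / ((n : ℝ) - (m : ℝ)))
  else
    ((n : ℝ) / sphereArea n) *
      (Real.pi ^ ((n : ℝ) / 2) * (2 : ℝ) ^ (m : ℝ) * Real.Gamma ((m : ℝ) / 2) /
        Real.Gamma (((n : ℝ) - (m : ℝ)) / 2)) ^ ((n : ℝ) / ((n : ℝ) - (m : ℝ)))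

/-- `u ∈ C_c^∞(Ω)`: `u` is smooth with compact support contained in `Ω`. -/
def IsCcSmooth {n : ℕ} (Ω : Set (EuclideanSpace ℝ (Fin n)))
    (u : EuclideanSpace ℝ (Fin n) → ℝ) : Prop :=
  ContDiff ℝ (⊤ : ℕ∞) u ∧ HasCompactSupport u ∧ tsupport u ⊆ Ω

section

open Set Metric Filter Topology
open scoped ENNReal

/-! ### Polar coordinates and the divergence identity -/

/-- Euclidean space `ℝⁿ`. -/
abbrev Euc (n : ℕ) : Type := EuclideanSpace ℝ (Fin n)

/-- Integration in polar coordinates for a function that need not be radial, together with the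
integrability along almost every ray. -/
lemma polar_aux {n : ℕ} (hn : 1 ≤ n) {F : Euc n → ℝ} (hF : Integrable F) :
    (∀ᵐ θ : sphere (0 : Euc n) 1 ∂(volume : Measure (Euc n)).toSphere,
      IntegrableOn (fun r : ℝ => r ^ (n - 1) * F (r • (θ : Euc n))) (Ioi 0)) ∧
    ∫ x, F x = ∫ θ, (∫ r in Ioi (0 : ℝ), r ^ (n - 1) * F (r • (θ : Euc n)))
      ∂(volume : Measure (Euc n)).toSphere := by
  have : Nonempty (Fin n) := ⟨⟨0, hn⟩⟩
  have : Nontrivial (Euc n) := inferInstance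
  let μ : Measure (Euc n) := volume
  have hmp := μ.measurePreserving_homeomorphUnitSphereProd
  have hdim : Module.finrank ℝ (Euc n) = n := by simp
  rw [hdim] at hmp
  set G : (sphere (0 : Euc n) 1) × Ioi (0 : ℝ) → ℝ := fun p => F (p.2.1 • (p.1 : Euc n)) with hG
  have hFG : ∀ x : ({0}ᶜ : Set (Euc n)), G (homeomorphUnitSphereProd (Euc n) x) = F x := by
    intro x
    have : (x : Euc n) ≠ 0 := x.2
    simp [hG, smul_smul, norm_ne_zero_iff.2 this]
  have hI : Integrable (fun x : ({0}ᶜ : Set (Euc n)) => F x) (μ.comap (↑)) := by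
    have : IntegrableOn F ({0}ᶜ : Set (Euc n)) μ := hF.integrableOn
    rwa [integrableOn_iff_comap_subtypeVal (by measurability)] at this
  have hGi : Integrable G (μ.toSphere.prod (Measure.volumeIoiPow (n - 1))) := by
    rw [← hmp.integrable_comp_emb (Homeomorph.measurableEmbedding _)]
    refine hI.congr (Eventually.of_forall fun x => ?_)
    simp [hFG]
  have key : ∀ f : ℝ → ℝ, (Integrable (fun r : Ioi (0 : ℝ) => f r) (Measure.volumeIoiPow (n - 1)) ↔
      IntegrableOn (fun r : ℝ => r ^ (n - 1) * f r) (Ioi 0)) ∧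
      ∫ r : Ioi (0 : ℝ), f r ∂(Measure.volumeIoiPow (n - 1)) =
        ∫ r in Ioi (0 : ℝ), r ^ (n - 1) * f r := by
    intro f
    constructor
    · rw [integrableOn_iff_comap_subtypeVal measurableSet_Ioi, Measure.volumeIoiPow,
        integrable_withDensity_iff_integrable_smul' (by fun_prop) (by simp), integrable_congr]
      refine .of_forall ?_
      rintro ⟨x, hx : 0 < x⟩
      simp (disch := positivity) [ENNReal.toReal_ofReal]
    · simp only [Measure.volumeIoiPow, ENNReal.ofReal]
      rw [integral_withDensity_eq_integral_smul
        ((measurable_subtype_coe.pow_const _).real_toNNReal),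
        integral_subtype_comap measurableSet_Ioi fun a ↦ Real.toNNReal (a ^ (n - 1)) • f a,
        setIntegral_congr_fun measurableSet_Ioi fun x hx ↦ ?_]
      rw [NNReal.smul_def, Real.coe_toNNReal _ (pow_nonneg (le_of_lt hx) _), smul_eq_mul]
  constructor
  · filter_upwards [hGi.prod_right_ae] with θ hθ
    exact ((key fun r => F (r • (θ : Euc n))).1).1 hθ
  · calc ∫ x, F x ∂μ = ∫ x : ({0}ᶜ : Set (Euc n)), F x ∂(μ.comap (↑)) := by
          rw [integral_subtype_comap (measurableSet_singleton _).compl F,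
            restrict_compl_singleton]
      _ = ∫ p, G p ∂(μ.toSphere.prod (Measure.volumeIoiPow (n - 1))) := by
          rw [← hmp.integral_comp (Homeomorph.measurableEmbedding _)]
          simp [hFG]
      _ = _ := by
          rw [integral_prod _ hGi]
          congr 1 with θ
          exact (key fun r => F (r • (θ : Euc n))).2

lemma integrableOn_kernel {n : ℕ} (hn : 1 ≤ n) {s : ℝ} (hs : -(n : ℝ) < s) (R : ℝ) :
    IntegrableOn (fun y : Euc n => ‖y‖ ^ s) (ball 0 R) := by
  have : Nonempty (Fin n) := ⟨⟨0, hn⟩⟩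
  have : Nontrivial (Euc n) := inferInstance
  rw [integrableOn_fun_norm_addHaar volume (f := fun r => r ^ s)]
  have hdim : Module.finrank ℝ (Euc n) = n := by simp
  rw [hdim]
  rcases le_or_gt R 0 with h | h
  · simp [Ioo_eq_empty_of_le h]
  have h1 : IntegrableOn (fun x : ℝ => x ^ (s + n - 1)) (Ioo 0 R) := by
    rw [← intervalIntegrable_iff_integrableOn_Ioo_of_le h.le]
    exact intervalIntegral.intervalIntegrable_rpow' (by linarith)
  refine h1.congr_fun (fun x hx => ?_) measurableSet_Ioo
  have : ((n - 1 : ℕ) : ℝ) = (n : ℝ) - 1 := by push_cast [hn]; ring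
  simp only [smul_eq_mul]
  rw [← Real.rpow_natCast, ← Real.rpow_add hx.1, this]
  ring_nf

/-- Integrability criterion for functions with a singularity of order `s > -n` at the origin. -/
lemma integrable_of_kernel_bound {n : ℕ} (hn : 1 ≤ n) {s : ℝ} (hs : -(n : ℝ) < s)
    {F h : Euc n → ℝ} (hF : Measurable F) (hh : Continuous h)
    (hc : HasCompactSupport h) (hb : ∀ y, |F y| ≤ ‖y‖ ^ s * |h y|) : Integrable F := by
  obtain ⟨C, hC⟩ := hh.bounded_above_of_compact_support hc
  obtain ⟨R, hR⟩ := hc.isCompact.isBounded.subset_ball (0 : Euc n)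
  have h1 : Integrable (fun y => (ball (0 : Euc n) R).indicator
      (fun y => ‖y‖ ^ s) y * C) :=
    ((integrableOn_kernel hn hs R).integrable_indicator measurableSet_ball).mul_const C
  refine h1.mono' hF.aestronglyMeasurable (Eventually.of_forall fun y => ?_)
  rw [Real.norm_eq_abs]
  by_cases hy : y ∈ ball (0 : Euc n) R
  · rw [indicator_of_mem hy]
    exact (hb y).trans (mul_le_mul_of_nonneg_left (hC y) (by positivity))
  · rw [indicator_of_notMem hy]
    have : h y = 0 := image_eq_zero_of_notMem_tsupport (fun h' => hy (hR h'))
    simpa [this] using hb y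

/-- The divergence identity for the homogeneous field `‖y‖ ^ (κ - n) y`. For `κ = 0` the field is
the gradient of the fundamental solution up to a constant (as `0 ^ (0 : ℝ) = 1`), for `κ > 0` the
right-hand side vanishes. -/
lemma radial_identity {n : ℕ} (hn : 1 ≤ n) {κ : ℝ} (hκ : 0 ≤ κ)
    {g : Euc n → ℝ} (hg : ContDiff ℝ (⊤ : ℕ∞) g) (hc : HasCompactSupport g) :
    Integrable (fun y => ‖y‖ ^ (κ - n) * (κ * g y)) ∧
    Integrable (fun y => ‖y‖ ^ (κ - n) * fderiv ℝ g y y) ∧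
    ∫ y, ‖y‖ ^ (κ - n) * (κ * g y + fderiv ℝ g y y) =
      -((n : ℝ) * (volume : Measure (Euc n)).real (ball 0 1) *
        ((0 : ℝ) ^ κ * g 0)) := by
  have hn0 : (0 : ℝ) < n := by exact_mod_cast hn
  have hd : Continuous (fun y => fderiv ℝ g y) := hg.continuous_fderiv (by simp)
  have hdiff : Differentiable ℝ g := hg.differentiable (by simp)
  have hdy : Continuous (fun y => fderiv ℝ g y y) := hd.clm_apply continuous_id
  have hgc := hg.continuous
  have i1 : Integrable (fun y => ‖y‖ ^ (κ - n) * (κ * g y)) := by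
    rcases hκ.eq_or_lt with h0 | h0
    · simp [← h0]
    · refine integrable_of_kernel_bound hn (s := κ - n) (by linarith)
        (h := fun y => κ * g y) ?_ (by fun_prop) (hc.mul_left) (fun y => ?_)
      · exact (measurable_norm.pow_const _).mul (by fun_prop)
      · rw [abs_mul, abs_of_nonneg (by positivity)]
  have i2 : Integrable (fun y => ‖y‖ ^ (κ - n) * fderiv ℝ g y y) := by
    refine integrable_of_kernel_bound hn (s := κ - n + 1) (by linarith)
        (h := fun y => ‖fderiv ℝ g y‖) ?_ (by fun_prop) ((hc.fderiv (𝕜 := ℝ)).norm) (fun y => ?_)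
    · exact (measurable_norm.pow_const _).mul (hdy.measurable)
    · rcases eq_or_ne y 0 with rfl | hy
      · simp; positivity
      · have : (0 : ℝ) < ‖y‖ := norm_pos_iff.2 hy
        rw [abs_mul, abs_of_nonneg (by positivity), Real.rpow_add_one this.ne', mul_assoc]
        gcongr
        rw [abs_norm, mul_comm]
        exact (fderiv ℝ g y).le_opNorm y
  refine ⟨i1, i2, ?_⟩
  have i3 : Integrable (fun y => ‖y‖ ^ (κ - n) * (κ * g y + fderiv ℝ g y y)) := by
    simp only [mul_add]; exact i1.add i2
  obtain ⟨hae, heq⟩ := polar_aux hn i3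
  rw [heq]
  have : ∀ᵐ θ : sphere (0 : Euc n) 1 ∂(volume : Measure (Euc n)).toSphere,
      (∫ r in Ioi (0 : ℝ), r ^ (n - 1) * (‖r • (θ : Euc n)‖ ^ (κ - n) *
        (κ * g (r • (θ : Euc n)) + fderiv ℝ g (r • (θ : Euc n))
          (r • (θ : Euc n))))) = 0 - (0 : ℝ) ^ κ * g 0 := by
    filter_upwards [hae] with θ hθ
    have hθ1 : ‖(θ : Euc n)‖ = 1 := by simp
    -- Along each ray the integrand is the derivative of `r ^ κ * g (r θ)`.
    have e1 := integral_Ioi_of_hasDerivAt_of_tendsto (a := 0) (m := 0)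
      (f := fun r : ℝ => r ^ κ * g (r • (θ : Euc n))) ?_ ?_ hθ ?_
    · simpa using e1
    · refine Continuous.continuousWithinAt ?_
      exact (Real.continuous_rpow_const hκ).mul (hgc.comp (by fun_prop))
    · intro r hr
      have hr : 0 < r := hr
      have d1 : HasDerivAt (fun r : ℝ => r • (θ : Euc n)) (θ : Euc n) r := by
        simpa using (hasDerivAt_id r).smul_const (θ : Euc n)
      have d2 := (hdiff (r • (θ : Euc n))).hasFDerivAt.comp_hasDerivAt r d1
      have d3 := (Real.hasDerivAt_rpow_const (p := κ) (Or.inl hr.ne')).mul d2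
      refine d3.congr_deriv ?_
      rw [norm_smul, hθ1, mul_one, Real.norm_of_nonneg hr.le, map_smul, smul_eq_mul]
      have : r ^ (n - 1) * r ^ (κ - n) = r ^ (κ - 1) := by
        have : ((n - 1 : ℕ) : ℝ) = (n : ℝ) - 1 := by push_cast [hn]; ring
        rw [← Real.rpow_natCast, ← Real.rpow_add hr, this]
        ring_nf
      have h2 : r ^ κ = r ^ (κ - 1) * r := by
        rw [← Real.rpow_add_one hr.ne']; ring_nf
      rw [← mul_assoc, this, h2]
      simp only [Function.comp]
      ring
    · obtain ⟨R, hR⟩ := hc.isCompact.isBounded.subset_ball (0 : Euc n)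
      refine tendsto_const_nhds.congr' ?_
      filter_upwards [eventually_gt_atTop (max R 0)] with r hr
      have : g (r • (θ : Euc n)) = 0 := by
        refine image_eq_zero_of_notMem_tsupport (fun h' => ?_)
        have := hR h'
        rw [mem_ball_zero_iff, norm_smul, hθ1, mul_one] at this
        have h3 := (le_max_left R 0).trans_lt hr
        have h4 := le_abs_self r
        rw [Real.norm_eq_abs] at this
        linarith
      simp [this]
  rw [integral_congr_ae this]
  simp

/-! ### Integration by parts for the Laplacian -/

lemma lap_eq_sum {n : ℕ} {g : Euc n → ℝ} (hg : ContDiff ℝ (⊤ : ℕ∞) g) (y : Euc n) :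
    lap n g y = ∑ i : Fin n, fderiv ℝ (fun z => fderiv ℝ g z (EuclideanSpace.single i 1)) y
      (EuclideanSpace.single i 1) := by
  unfold lap
  refine Finset.sum_congr rfl fun i _ => ?_
  have hd : ContDiff ℝ (⊤ : ℕ∞) (fderiv ℝ g) := hg.fderiv_right (by simp)
  have hd1 : DifferentiableAt ℝ (fderiv ℝ g) y := (hd.differentiable (by simp)) y
  rw [iteratedFDeriv_two_apply, fderiv_clm_apply hd1 (differentiableAt_const _)]
  simp

lemma lap_contDiff {n : ℕ} {g : Euc n → ℝ} (hg : ContDiff ℝ (⊤ : ℕ∞) g) :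
    ContDiff ℝ (⊤ : ℕ∞) (lap n g) := by
  rw [show lap n g = _ from funext (lap_eq_sum hg)]
  refine ContDiff.sum fun i _ => ?_
  have h1 : ContDiff ℝ (⊤ : ℕ∞) (fun z => fderiv ℝ g z (EuclideanSpace.single i 1)) :=
    (hg.fderiv_right (by simp)).clm_apply contDiff_const
  exact (h1.fderiv_right (by simp)).clm_apply contDiff_const

lemma lap_support {n : ℕ} (g : Euc n → ℝ) : tsupport (lap n g) ⊆ tsupport g := by
  refine closure_minimal (fun y hy => ?_) (isClosed_tsupport g)
  by_contra h
  apply hy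
  have : iteratedFDeriv ℝ 2 g y = 0 := by
    by_contra h2
    exact h (support_iteratedFDeriv_subset 2 h2)
  simp [lap, this]

lemma lap_cc {n : ℕ} {Ω : Set (Euc n)} {g : Euc n → ℝ} (hg : IsCcSmooth Ω g) :
    IsCcSmooth Ω (lap n g) :=
  ⟨lap_contDiff hg.1, hg.2.1.mono' (subset_tsupport _ |>.trans (lap_support g)),
    (lap_support g).trans hg.2.2⟩

lemma lap_iter_cc {n : ℕ} {Ω : Set (Euc n)} {g : Euc n → ℝ} (hg : IsCcSmooth Ω g) (j : ℕ) :
    IsCcSmooth Ω ((lap n)^[j] g) := by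
  induction j with
  | zero => exact hg
  | succ j ih => rw [Function.iterate_succ_apply']; exact lap_cc ih

lemma lap_translate {n : ℕ} (g : Euc n → ℝ) (x : Euc n) (j : ℕ) :
    (lap n)^[j] (fun y => g (y + x)) = fun y => (lap n)^[j] g (y + x) := by
  induction j with
  | zero => rfl
  | succ j ih =>
    rw [Function.iterate_succ_apply', Function.iterate_succ_apply', ih]
    funext y
    simp [lap, iteratedFDeriv_comp_add_right]

/-- Integration by parts against the regularized kernel `(‖y‖² + ε) ^ (s / 2)`. -/
lemma lap_parts_reg {n : ℕ} {g : Euc n → ℝ} (hg : ContDiff ℝ (⊤ : ℕ∞) g)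
    (hc : HasCompactSupport g) (s : ℝ) {ε : ℝ} (hε : 0 < ε) :
    ∫ y, (‖y‖ ^ 2 + ε) ^ (s / 2) * lap n g y =
      -(s * ∫ y, (‖y‖ ^ 2 + ε) ^ (s / 2 - 1) * fderiv ℝ g y y) := by
  have hpos : ∀ y : Euc n, 0 < ‖y‖ ^ 2 + ε := fun y => by positivity
  have hφc : ∀ a : ℝ, Continuous (fun y : Euc n => (‖y‖ ^ 2 + ε) ^ a) := fun a =>
    (by fun_prop : Continuous (fun y : Euc n => ‖y‖ ^ 2 + ε)).rpow_const
      (fun y => Or.inl (hpos y).ne')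
  have hφd : ∀ y : Euc n, HasFDerivAt (fun y : Euc n => (‖y‖ ^ 2 + ε) ^ (s / 2))
      ((s / 2 * (‖y‖ ^ 2 + ε) ^ (s / 2 - 1)) • (2 • (innerSL ℝ y))) y := fun y => by
    have h1 : HasFDerivAt (fun y : Euc n => ‖y‖ ^ 2 + ε) (2 • (innerSL ℝ y)) y :=
      (hasStrictFDerivAt_norm_sq y).hasFDerivAt.add_const ε
    exact h1.rpow_const (Or.inl (hpos y).ne')
  have hφe : ∀ (y v : Euc n), fderiv ℝ (fun y : Euc n => (‖y‖ ^ 2 + ε) ^ (s / 2)) y v =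
      s * (‖y‖ ^ 2 + ε) ^ (s / 2 - 1) * inner ℝ y v := fun y v => by
    rw [(hφd y).fderiv]; simp; ring
  have hD : ∀ v : Euc n, ContDiff ℝ (⊤ : ℕ∞) (fun z => fderiv ℝ g z v) := fun v =>
    (hg.fderiv_right (by simp)).clm_apply contDiff_const
  have hDc : ∀ v : Euc n, HasCompactSupport (fun z => fderiv ℝ g z v) := fun v =>
    hc.fderiv_apply (𝕜 := ℝ) v
  have hDD : ∀ v : Euc n, Continuous (fun y => fderiv ℝ (fun z => fderiv ℝ g z v) y v) := fun v =>
    ((hD v).continuous_fderiv (by simp)).clm_apply continuous_const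
  have I1 : ∀ v : Euc n, Integrable (fun y => (‖y‖ ^ 2 + ε) ^ (s / 2) *
      fderiv ℝ (fun z => fderiv ℝ g z v) y v) := fun v =>
    ((hφc _).mul (hDD v)).integrable_of_hasCompactSupport (((hDc v).fderiv_apply (𝕜 := ℝ) v).mul_left)
  have I2 : ∀ v : Euc n, Integrable (fun y => s * (‖y‖ ^ 2 + ε) ^ (s / 2 - 1) * inner ℝ y v *
      fderiv ℝ g y v) := fun v =>
    (((continuous_const.mul (hφc _)).mul (by fun_prop)).mul
      (hD v).continuous).integrable_of_hasCompactSupport ((hDc v).mul_left)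
  have step : ∀ v : Euc n, ∫ y, (‖y‖ ^ 2 + ε) ^ (s / 2) *
      fderiv ℝ (fun z => fderiv ℝ g z v) y v =
      - ∫ y, s * (‖y‖ ^ 2 + ε) ^ (s / 2 - 1) * inner ℝ y v * fderiv ℝ g y v := fun v => by
    rw [integral_mul_fderiv_eq_neg_fderiv_mul_of_integrable]
    · simp only [hφe]
    · simpa only [hφe] using I2 v
    · exact I1 v
    · exact ((hφc _).mul (hD v).continuous).integrable_of_hasCompactSupport ((hDc v).mul_left)
    · exact fun y _ => (hφd y).differentiableAt
    · exact fun y _ => ((hD v).differentiable (by simp)) y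
  simp only [lap_eq_sum hg, Finset.mul_sum]
  rw [integral_finsetSum _ (fun i _ => I1 _)]
  simp only [step]
  rw [Finset.sum_neg_distrib, ← integral_finsetSum _ (fun i _ => I2 _), ← integral_const_mul]
  congr 2 with y
  have hy : fderiv ℝ g y y = ∑ i : Fin n, inner ℝ y (EuclideanSpace.single i (1 : ℝ)) *
      fderiv ℝ g y (EuclideanSpace.single i 1) := by
    have h := congrArg (fderiv ℝ g y) ((EuclideanSpace.basisFun (Fin n) ℝ).sum_repr y).symm
    rw [h]
    simp only [map_sum, map_smul]
    simp [EuclideanSpace.inner_single_right]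
  rw [hy, Finset.mul_sum, Finset.mul_sum]
  refine Finset.sum_congr rfl fun i _ => by ring

/-- Integration by parts against the singular kernel `‖y‖ ^ s`, obtained by letting `ε → 0` in
`lap_parts_reg`; no boundary term appears at the origin since `s > 1 - n`. -/
lemma lap_parts {n : ℕ} (hn : 1 ≤ n) {g : Euc n → ℝ} (hg : ContDiff ℝ (⊤ : ℕ∞) g)
    (hc : HasCompactSupport g) {s : ℝ} (hs : s < 0) (hs' : 1 - (n : ℝ) < s) :
    ∫ y, ‖y‖ ^ s * lap n g y = -(s * ∫ y, ‖y‖ ^ (s - 2) * fderiv ℝ g y y) := by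
  have : Nonempty (Fin n) := ⟨⟨0, hn⟩⟩
  have : Nontrivial (Euc n) := inferInstance
  set ε : ℕ → ℝ := fun k => 1 / ((k : ℝ) + 1)
  have hε : ∀ k, 0 < ε k := fun k => by positivity
  have hεt : Tendsto ε atTop (𝓝 0) := tendsto_one_div_add_atTop_nhds_zero_nat
  have hpos : ∀ (y : Euc n) k, 0 < ‖y‖ ^ 2 + ε k := fun y k => by have := hε k; positivity
  have hφc : ∀ k (a : ℝ), Continuous (fun y : Euc n => (‖y‖ ^ 2 + ε k) ^ a) := fun k a =>
    (by fun_prop : Continuous (fun y : Euc n => ‖y‖ ^ 2 + ε k)).rpow_const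
      (fun y => Or.inl (hpos y k).ne')
  have hne : ∀ᵐ y : Euc n, y ≠ 0 := by
    simp [ae_iff]
  have hle : ∀ (a : ℝ), a ≤ 0 → ∀ k (y : Euc n), y ≠ 0 →
      (‖y‖ ^ 2 + ε k) ^ (a / 2) ≤ ‖y‖ ^ a := fun a ha k y hy => by
    have h0 : 0 < ‖y‖ := norm_pos_iff.2 hy
    calc (‖y‖ ^ 2 + ε k) ^ (a / 2) ≤ (‖y‖ ^ 2) ^ (a / 2) :=
          Real.rpow_le_rpow_of_nonpos (by positivity) (by linarith [hε k]) (by linarith)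
      _ = ‖y‖ ^ a := by
          rw [← Real.rpow_natCast, ← Real.rpow_mul h0.le]; congr 1; push_cast; ring
  have hlim : ∀ (a : ℝ) (y : Euc n), y ≠ 0 →
      Tendsto (fun k => (‖y‖ ^ 2 + ε k) ^ (a / 2)) atTop (𝓝 (‖y‖ ^ a)) := fun a y hy => by
    have h0 : 0 < ‖y‖ := norm_pos_iff.2 hy
    have h1 : (‖y‖ ^ 2 + 0) ^ (a / 2) = ‖y‖ ^ a := by
      rw [add_zero, ← Real.rpow_natCast, ← Real.rpow_mul h0.le]; congr 1; push_cast; ring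
    rw [← h1]
    exact (tendsto_const_nhds.add hεt).rpow_const (Or.inl (by positivity))
  have hlc := (lap_contDiff hg).continuous
  have hlcc : HasCompactSupport (lap n g) :=
    hc.mono' (subset_tsupport _ |>.trans (lap_support g))
  have hd : Continuous (fun y => fderiv ℝ g y) := hg.continuous_fderiv (by simp)
  have hdy : Continuous (fun y => fderiv ℝ g y y) := hd.clm_apply continuous_id
  have T1 : Tendsto (fun k => ∫ y, (‖y‖ ^ 2 + ε k) ^ (s / 2) * lap n g y) atTop
      (𝓝 (∫ y, ‖y‖ ^ s * lap n g y)) := by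
    refine tendsto_integral_of_dominated_convergence (fun y => ‖y‖ ^ s * |lap n g y|)
      (fun k => ((hφc k _).mul hlc).aestronglyMeasurable) ?_ (fun k => ?_) ?_
    · refine integrable_of_kernel_bound hn (s := s) (by linarith)
        (h := fun y => |lap n g y|) ?_ (by fun_prop) hlcc.norm (fun y => ?_)
      · exact (measurable_norm.pow_const _).mul (by fun_prop)
      · rw [abs_mul, abs_of_nonneg (by positivity)]
    · filter_upwards [hne] with y hy
      rw [norm_mul, Real.norm_of_nonneg (Real.rpow_nonneg (hpos y k).le _), Real.norm_eq_abs]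
      gcongr
      exact hle s hs.le k y hy
    · filter_upwards [hne] with y hy
      exact (hlim s y hy).mul_const _
  have T2 : Tendsto (fun k => ∫ y, (‖y‖ ^ 2 + ε k) ^ (s / 2 - 1) * fderiv ℝ g y y) atTop
      (𝓝 (∫ y, ‖y‖ ^ (s - 2) * fderiv ℝ g y y)) := by
    have e : s / 2 - 1 = (s - 2) / 2 := by ring
    rw [e]
    refine tendsto_integral_of_dominated_convergence (fun y => ‖y‖ ^ (s - 1) * ‖fderiv ℝ g y‖)
      (fun k => ((hφc k _).mul hdy).aestronglyMeasurable) ?_ (fun k => ?_) ?_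
    · refine integrable_of_kernel_bound hn (s := s - 1) (by linarith)
        (h := fun y => ‖fderiv ℝ g y‖) ?_ (by fun_prop) ((hc.fderiv (𝕜 := ℝ)).norm) (fun y => ?_)
      · exact (measurable_norm.pow_const _).mul hd.norm.measurable
      · rw [abs_mul, abs_of_nonneg (by positivity)]
    · filter_upwards [hne] with y hy
      have h0 : 0 < ‖y‖ := norm_pos_iff.2 hy
      rw [norm_mul, Real.norm_of_nonneg (Real.rpow_nonneg (hpos y k).le _)]
      calc _ ≤ ‖y‖ ^ (s - 2) * (‖fderiv ℝ g y‖ * ‖y‖) := by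
            gcongr
            · exact hle (s - 2) (by linarith) k y hy
            · exact (fderiv ℝ g y).le_opNorm y
        _ = ‖y‖ ^ (s - 1) * ‖fderiv ℝ g y‖ := by
            rw [show s - 1 = s - 2 + 1 by ring, Real.rpow_add_one h0.ne']; ring
    · filter_upwards [hne] with y hy
      exact (hlim (s - 2) y hy).mul_const _
  simp only [lap_parts_reg hg hc s (hε _)] at T1
  exact tendsto_nhds_unique T1 ((T2.const_mul s).neg)

/-! ### The representation formula -/

/-- The normalizing constant of the representation formula; the Adams constant is
`n / ω_{n-1} * repConst n m ^ (n / (n - m))`. -/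
def repConst (n m : ℕ) : ℝ :=
  if m % 2 = 1 then
    π ^ ((n : ℝ) / 2) * (2 : ℝ) ^ (m : ℝ) * Gamma (((m : ℝ) + 1) / 2) /
      Gamma (((n : ℝ) - (m : ℝ) + 1) / 2)
  else
    π ^ ((n : ℝ) / 2) * (2 : ℝ) ^ (m : ℝ) * Gamma ((m : ℝ) / 2) /
      Gamma (((n : ℝ) - (m : ℝ)) / 2)

lemma adamsConst_eq (n m : ℕ) : adamsConst n m =
    ((n : ℝ) / sphereArea n) * repConst n m ^ ((n : ℝ) / ((n : ℝ) - (m : ℝ))) := by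
  unfold adamsConst repConst
  split_ifs <;> rfl

lemma repConst_pos {n m : ℕ} (hm : 1 ≤ m) (hnm : m < n) : 0 < repConst n m := by
  have h1 : (1 : ℝ) ≤ m := by exact_mod_cast hm
  have h2 : (m : ℝ) < n := by exact_mod_cast hnm
  have g1 := Gamma_pos_of_pos (s := ((m : ℝ) + 1) / 2) (by linarith)
  have g2 := Gamma_pos_of_pos (s := ((n : ℝ) - (m : ℝ) + 1) / 2) (by linarith)
  have g3 := Gamma_pos_of_pos (s := (m : ℝ) / 2) (by linarith)
  have g4 := Gamma_pos_of_pos (s := ((n : ℝ) - (m : ℝ)) / 2) (by linarith)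
  unfold repConst
  split_ifs <;> positivity

lemma sphereArea_eq {n : ℕ} (hn : 1 ≤ n) :
    (n : ℝ) * (volume : Measure (Euc n)).real (ball 0 1) = sphereArea n := by
  have : Nonempty (Fin n) := ⟨⟨0, hn⟩⟩
  have hn0 : (0 : ℝ) < n := by exact_mod_cast hn
  have g := Gamma_pos_of_pos (s := (n : ℝ) / 2) (by positivity)
  rw [Measure.real, EuclideanSpace.volume_ball, sphereArea]
  simp only [ENNReal.ofReal_one, one_pow, one_mul, Fintype.card_fin]
  rw [Gamma_add_one (by positivity), ENNReal.toReal_ofReal (by positivity)]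
  have : √π ^ n = π ^ ((n : ℝ) / 2) := by
    rw [Real.sqrt_eq_rpow, ← Real.rpow_natCast, ← Real.rpow_mul pi_pos.le]; ring_nf
  rw [this]
  field_simp

lemma sphereArea_pos {n : ℕ} (hn : 1 ≤ n) : 0 < sphereArea n := by
  have hn0 : (0 : ℝ) < n := by exact_mod_cast hn
  have g := Gamma_pos_of_pos (s := (n : ℝ) / 2) (by positivity)
  unfold sphereArea
  positivity

/-- The divergence identity solved for the radial derivative term. -/
lemma radial_identity' {n : ℕ} (hn : 1 ≤ n) {κ : ℝ} (hκ : 0 ≤ κ)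
    {g : Euc n → ℝ} (hg : ContDiff ℝ (⊤ : ℕ∞) g) (hc : HasCompactSupport g) :
    ∫ y, ‖y‖ ^ (κ - n) * fderiv ℝ g y y =
      -(κ * ∫ y, ‖y‖ ^ (κ - n) * g y) - sphereArea n * ((0 : ℝ) ^ κ * g 0) := by
  obtain ⟨i1, i2, h⟩ := radial_identity hn hκ hg hc
  simp only [mul_add] at h
  rw [integral_add i1 i2, sphereArea_eq hn] at h
  have : ∫ y, ‖y‖ ^ (κ - n) * (κ * g y) = κ * ∫ y, ‖y‖ ^ (κ - n) * g y := by
    rw [← integral_const_mul]; congr 1 with y; ring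
  linarith

/-- Representation of `g` through the iterated Laplacian: `‖y‖ ^ (2 j - n)` is a multiple of the
fundamental solution of `Δ ^ j`. -/
lemma even_rep {n : ℕ} {g : Euc n → ℝ} (hg : IsCcSmooth univ g) (j : ℕ) (hj : 2 * (j + 1) < n) :
    ∫ y, ‖y‖ ^ (2 * ((j : ℝ) + 1) - n) * (lap n)^[j + 1] g y =
      (-1) ^ (j + 1) * (π ^ ((n : ℝ) / 2) * 4 ^ (j + 1) * Gamma ((j : ℝ) + 1) /
        Gamma ((n : ℝ) / 2 - (j + 1))) * g 0 := by
  have hn : 1 ≤ n := by omega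
  have hjn : 2 * ((j : ℝ) + 1) < n := by exact_mod_cast hj
  have hj0 : (0 : ℝ) ≤ j := by positivity
  have g1 := Gamma_pos_of_pos (s := (n : ℝ) / 2 - (j + 1)) (by linarith)
  have hΓ : Gamma ((n : ℝ) / 2 - j) = ((n : ℝ) / 2 - (j + 1)) * Gamma ((n : ℝ) / 2 - (j + 1)) := by
    rw [← Gamma_add_one (by linarith)]; ring_nf
  have hne : (n : ℝ) / 2 - (j + 1) ≠ 0 := by linarith
  have hcc := lap_iter_cc hg j
  rw [Function.iterate_succ_apply', lap_parts hn hcc.1 hcc.2.1 (by linarith) (by linarith),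
    show 2 * ((j : ℝ) + 1) - n - 2 = 2 * (j : ℝ) - n by ring,
    radial_identity' hn (by positivity) hcc.1 hcc.2.1]
  induction j with
  | zero =>
    simp only [Nat.cast_zero] at *
    simp only [sphereArea]
    rw [sub_zero] at hΓ
    rw [hΓ]
    generalize Gamma ((n : ℝ) / 2 - (0 + 1)) = G at *
    generalize π ^ ((n : ℝ) / 2) = P
    obtain ⟨D, hD⟩ : ∃ D, (n : ℝ) / 2 - (0 + 1) = D := ⟨_, rfl⟩
    have hn' : (n : ℝ) = 2 * D + 2 := by linarith
    rw [hD] at hne ⊢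
    rw [hn']
    simp
    field_simp
    ring
  | succ j ih =>
    have hcc' := lap_iter_cc hg j
    have hj' : 2 * (j + 1) < n := by omega
    have hjn' : 2 * ((j : ℝ) + 1) < n := by exact_mod_cast hj'
    have hj0' : (0 : ℝ) ≤ j := by positivity
    have g1' := Gamma_pos_of_pos (s := (n : ℝ) / 2 - (j + 1)) (by linarith)
    have hΓ' : Gamma ((n : ℝ) / 2 - j) =
        ((n : ℝ) / 2 - (j + 1)) * Gamma ((n : ℝ) / 2 - (j + 1)) := by
      rw [← Gamma_add_one (by linarith)]; ring_nf
    have ih' := ih hj' hjn' hj0' g1' hΓ' (by linarith) hcc'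
    rw [← radial_identity' hn (by positivity) hcc'.1 hcc'.2.1,
      show 2 * (j : ℝ) - n = 2 * ((j : ℝ) + 1) - n - 2 by ring,
      ← lap_parts hn hcc'.1 hcc'.2.1 (by linarith) (by linarith),
      ← Function.iterate_succ_apply' (lap n)] at ih'
    push_cast at *
    rw [ih', Real.zero_rpow (by positivity), Gamma_add_one (s := (j : ℝ) + 1) (by positivity), hΓ]
    rw [pow_succ (-1 : ℝ) (j + 1), pow_succ (4 : ℝ) (j + 1)]
    generalize Gamma ((n : ℝ) / 2 - ((j : ℝ) + 1 + 1)) = G at *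
    generalize π ^ ((n : ℝ) / 2) = P
    obtain ⟨D, hD⟩ : ∃ D, (n : ℝ) / 2 - ((j : ℝ) + 1 + 1) = D := ⟨_, rfl⟩
    have hn' : (n : ℝ) = 2 * (D + (j + 1 + 1)) := by linarith
    rw [hD] at hne ⊢
    rw [hn']
    field_simp
    ring

lemma norm_gradient {n : ℕ} (g : Euc n → ℝ) (y : Euc n) : ‖gradient g y‖ = ‖fderiv ℝ g y‖ := by
  simp [gradient]

/-- Pointwise bound at the origin by the Riesz potential of the `m`-th order gradient. -/
lemma rep_bound_zero {n m : ℕ} (hm : 1 ≤ m) (hnm : 2 * m ≤ n) {g : Euc n → ℝ}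
    (hg : IsCcSmooth univ g) :
    ENNReal.ofReal (repConst n m * |g 0|) ≤
      ∫⁻ y : Euc n, ENNReal.ofReal (‖y‖ ^ ((m : ℝ) - n)) * ENNReal.ofReal (mGradNorm n m g y) := by
  have hn : 1 ≤ n := by omega
  have hRpos := repConst_pos hm (show m < n by omega)
  suffices ∃ F : Euc n → ℝ, |∫ y, F y| = repConst n m * |g 0| ∧
      ∀ y, |F y| ≤ ‖y‖ ^ ((m : ℝ) - n) * mGradNorm n m g y by
    obtain ⟨F, h1, h2⟩ := this
    rw [← h1, ← Real.norm_eq_abs, ofReal_norm]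
    refine (enorm_integral_le_lintegral_enorm _).trans (lintegral_mono fun y => ?_)
    rw [← ENNReal.ofReal_mul (by positivity), ← ofReal_norm]
    exact ENNReal.ofReal_le_ofReal (h2 y)
  rcases Nat.even_or_odd' m with ⟨j, rfl | rfl⟩
  · obtain ⟨i, rfl⟩ : ∃ i, j = i + 1 := ⟨j - 1, by omega⟩
    have hmod : 2 * (i + 1) % 2 ≠ 1 := by omega
    have hdiv : 2 * (i + 1) / 2 = i + 1 := by omega
    refine ⟨fun y => ‖y‖ ^ (2 * ((i : ℝ) + 1) - n) * (lap n)^[i + 1] g y, ?_, fun y => ?_⟩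
    · rw [even_rep hg i (by omega), abs_mul, abs_mul, abs_pow]
      simp only [abs_neg, abs_one, one_pow, one_mul]
      have e : π ^ ((n : ℝ) / 2) * 4 ^ (i + 1) * Gamma ((i : ℝ) + 1) /
        Gamma ((n : ℝ) / 2 - (i + 1)) = repConst n (2 * (i + 1)) := by
        rw [repConst, if_neg hmod, Real.rpow_natCast, pow_mul]
        push_cast
        norm_num
        congr 2
        ring
      rw [e, abs_of_pos hRpos]
    · simp only [mGradNorm, if_neg hmod, hdiv, abs_mul]
      rw [abs_of_nonneg (by positivity : 0 ≤ ‖y‖ ^ (2 * ((i : ℝ) + 1) - n))]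
      push_cast
      rfl
  · have hmod : (2 * j + 1) % 2 = 1 := by omega
    have hdiv : (2 * j + 1 - 1) / 2 = j := by omega
    have hcc := lap_iter_cc hg j
    refine ⟨fun y => ‖y‖ ^ (2 * (j : ℝ) - n) * fderiv ℝ ((lap n)^[j] g) y y, ?_, fun y => ?_⟩
    · rw [radial_identity' hn (by positivity) hcc.1 hcc.2.1]
      rcases Nat.eq_zero_or_pos j with rfl | hj
      · have e : repConst n (2 * 0 + 1) = sphereArea n := by
          rw [repConst, if_pos hmod, sphereArea]
          norm_num
          ring_nf
        rw [e]
        simp [abs_mul, abs_of_pos (sphereArea_pos hn)]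
      · obtain ⟨i, rfl⟩ : ∃ i, j = i + 1 := ⟨j - 1, by omega⟩
        have h2 := even_rep hg i (by omega)
        push_cast at *
        rw [h2, Real.zero_rpow (by positivity)]
        have e : repConst n (2 * (i + 1) + 1) = 2 * ((i : ℝ) + 1) * (π ^ ((n : ℝ) / 2) * 4 ^ (i + 1) * Gamma ((i : ℝ) + 1) /
            Gamma ((n : ℝ) / 2 - (i + 1))) := by
          rw [repConst, if_pos hmod, Real.rpow_natCast, pow_succ, pow_mul]
          have e1 : (((2 * (i + 1) + 1 : ℕ) : ℝ) + 1) / 2 = (i : ℝ) + 1 + 1 := by push_cast; ring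
          have e2 : ((n : ℝ) - ((2 * (i + 1) + 1 : ℕ) : ℝ) + 1) / 2 = (n : ℝ) / 2 - (i + 1) := by
            push_cast; ring
          rw [e1, e2, Gamma_add_one (by positivity)]
          norm_num
          ring
        have hpos : 0 < 2 * ((i : ℝ) + 1) * (π ^ ((n : ℝ) / 2) * 4 ^ (i + 1) * Gamma ((i : ℝ) + 1) /
            Gamma ((n : ℝ) / 2 - (i + 1))) := by rw [← e]; exact hRpos
        rw [e, ← abs_of_pos hpos, ← abs_mul]
        simp only [zero_mul, mul_zero, sub_zero, abs_neg, abs_mul, abs_pow, abs_one, one_pow]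
        simp only [one_mul, mul_assoc]
    · simp only [mGradNorm, if_pos hmod, hdiv, abs_mul, norm_gradient]
      rw [abs_of_nonneg (by positivity : 0 ≤ ‖y‖ ^ (2 * (j : ℝ) - n))]
      rcases eq_or_ne y 0 with rfl | hy
      · simp; positivity
      · have : (0 : ℝ) < ‖y‖ := norm_pos_iff.2 hy
        push_cast
        rw [show 2 * (j : ℝ) + 1 - n = 2 * (j : ℝ) - n + 1 by ring,
          Real.rpow_add_one this.ne', mul_assoc]
        gcongr
        rw [mul_comm ‖y‖, ← Real.norm_eq_abs]
        exact ContinuousLinearMap.le_opNorm _ y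

lemma mGradNorm_translate {n m : ℕ} (g : Euc n → ℝ) (x y : Euc n) :
    mGradNorm n m (fun z => g (z + x)) y = mGradNorm n m g (y + x) := by
  unfold mGradNorm
  split_ifs
  · rw [norm_gradient, norm_gradient, lap_translate, fderiv_comp_add_right]
  · rw [lap_translate]

/-- Pointwise bound of `g` by the Riesz potential of its `m`-th order gradient, with the constant that
produces Adams' exponent. -/
lemma rep_bound {n m : ℕ} (hm : 1 ≤ m) (hnm : 2 * m ≤ n) {g : Euc n → ℝ} {Ω : Set (Euc n)}
    (hg : IsCcSmooth Ω g) (x : Euc n) :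
    ENNReal.ofReal (repConst n m * |g x|) ≤
      ∫⁻ y : Euc n, ENNReal.ofReal (‖y - x‖ ^ ((m : ℝ) - n)) *
        ENNReal.ofReal (mGradNorm n m g y) := by
  have h : IsCcSmooth univ (fun z : Euc n => g (z + x)) :=
    ⟨hg.1.comp (contDiff_id.add contDiff_const),
      hg.2.1.comp_isClosedEmbedding (Homeomorph.addRight x).isClosedEmbedding, subset_univ _⟩
  have h1 := rep_bound_zero hm hnm h
  simp only [mGradNorm_translate, zero_add] at h1
  rw [← lintegral_add_right_eq_self _ x]
  simpa using h1

lemma mGradNorm_nonneg (n m : ℕ) (g : Euc n → ℝ) (x : Euc n) : 0 ≤ mGradNorm n m g x := by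
  unfold mGradNorm
  split_ifs <;> positivity

lemma mGradNorm_continuous {n m : ℕ} {g : Euc n → ℝ} {Ω : Set (Euc n)} (hg : IsCcSmooth Ω g) :
    Continuous (mGradNorm n m g) := by
  have h1 := (lap_iter_cc hg ((m - 1) / 2)).1.continuous_fderiv (by simp)
  have h2 := (lap_iter_cc hg (m / 2)).1.continuous
  unfold mGradNorm
  split_ifs
  · simp only [norm_gradient]; exact h1.norm
  · exact h2.abs

lemma mGradNorm_support {n m : ℕ} {g : Euc n → ℝ} {Ω : Set (Euc n)} (hg : IsCcSmooth Ω g)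
    {x : Euc n} (hx : x ∉ Ω) : mGradNorm n m g x = 0 := by
  have h1 : fderiv ℝ ((lap n)^[(m - 1) / 2] g) x = 0 :=
    fderiv_of_notMem_tsupport ℝ fun h => hx ((lap_iter_cc hg _).2.2 h)
  have h2 : (lap n)^[m / 2] g x = 0 :=
    image_eq_zero_of_notMem_tsupport fun h => hx ((lap_iter_cc hg _).2.2 h)
  unfold mGradNorm
  split_ifs
  · rw [norm_gradient, h1, norm_zero]
  · rw [h2, abs_zero]

lemma mGradNorm_compact {n m : ℕ} {g : Euc n → ℝ} {Ω : Set (Euc n)} (hg : IsCcSmooth Ω g) :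
    HasCompactSupport (mGradNorm n m g) := by
  refine hg.2.1.mono' fun x hx => ?_
  by_contra h
  exact hx (mGradNorm_support (Ω := tsupport g) ⟨hg.1, hg.2.1, subset_rfl⟩ h)

/-! ### Exponential integrability of Riesz potentials -/

/-- `(a + b) ^ r ≤ K a ^ r + D b ^ r` with `K` as close to `1` as desired. -/
lemma pow_split {r K : ℝ} (hr : 0 < r) (hK : 1 < K) :
    ∃ D : ℝ, 0 ≤ D ∧ ∀ a b : ℝ, 0 ≤ a → 0 ≤ b → (a + b) ^ r ≤ K * a ^ r + D * b ^ r := by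
  have h1 : Tendsto (fun t : ℝ => (1 + t) ^ r) (𝓝[>] 0) (𝓝 1) := by
    have : ContinuousAt (fun t : ℝ => (1 + t) ^ r) 0 :=
      (by fun_prop : ContinuousAt (fun t : ℝ => 1 + t) 0).rpow_const (Or.inl (by norm_num))
    have h2 := this.tendsto
    simp only [add_zero, Real.one_rpow] at h2
    exact h2.mono_left nhdsWithin_le_nhds
  obtain ⟨t, ht, ht0⟩ := ((h1.eventually (gt_mem_nhds hK)).and self_mem_nhdsWithin).exists
  have ht0 : 0 < t := ht0
  refine ⟨(1 + 1 / t) ^ r, by positivity, fun a b ha hb => ?_⟩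
  have p1 : 0 ≤ K * a ^ r := by positivity
  have p2 : 0 ≤ (1 + 1 / t) ^ r * b ^ r := by positivity
  rcases le_total b (t * a) with h | h
  · calc (a + b) ^ r ≤ ((1 + t) * a) ^ r := by gcongr; linarith
      _ = (1 + t) ^ r * a ^ r := Real.mul_rpow (by positivity) ha
      _ ≤ K * a ^ r := by gcongr
      _ ≤ _ := by linarith
  · calc (a + b) ^ r ≤ ((1 + 1 / t) * b) ^ r := by
          gcongr
          have : a ≤ 1 / t * b := by
            rw [one_div, inv_mul_eq_div, le_div_iff₀ ht0]; linarith
          linarith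
      _ = (1 + 1 / t) ^ r * b ^ r := Real.mul_rpow (by positivity) hb
      _ ≤ _ := by linarith

/-- Young's inequality `‖k ⋆ f‖_q ≤ ‖k‖_1 ‖f‖_q`. -/
lemma young_one {n : ℕ} {q q' : ℝ} (hq : q.HolderConjugate q') {k f : Euc n → ℝ≥0∞}
    (hk : Measurable k) (hf : Measurable f) :
    ∫⁻ x, (∫⁻ y, k (y - x) * f y) ^ q ≤ (∫⁻ z, k z) ^ q * ∫⁻ y, f y ^ q := by
  have hq0 := hq.pos
  have hq'0 := hq.symm.pos
  have hsum : 1 / q' + 1 / q = 1 := by simpa using hq.symm.inv_add_inv_eq_one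
  have hkm : ∀ x, Measurable (fun y => k (y - x)) := fun x => hk.comp (measurable_id.sub_const x)
  have hpt : ∀ x, (∫⁻ y, k (y - x) * f y) ^ q ≤
      (∫⁻ z, k z) ^ (q - 1) * ∫⁻ y, k (y - x) * f y ^ q := fun x => by
    have h1 := ENNReal.lintegral_mul_le_Lp_mul_Lq volume hq.symm
      (f := fun y => k (y - x) ^ (1 / q')) (g := fun y => k (y - x) ^ (1 / q) * f y)
      ((hkm x).pow_const _).aemeasurable (((hkm x).pow_const _).mul hf).aemeasurable
    have e1 : ∀ y, ((fun y => k (y - x) ^ (1 / q')) * fun y => k (y - x) ^ (1 / q) * f y) y =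
        k (y - x) * f y := fun y => by
      simp only [Pi.mul_apply]
      rw [← mul_assoc, ← ENNReal.rpow_add_of_nonneg _ _ (by positivity) (by positivity), hsum,
        ENNReal.rpow_one]
    have e2 : ∀ y, (k (y - x) ^ (1 / q')) ^ q' = k (y - x) := fun y => by
      rw [← ENNReal.rpow_mul, one_div_mul_cancel hq'0.ne', ENNReal.rpow_one]
    have e3 : ∀ y, (k (y - x) ^ (1 / q) * f y) ^ q = k (y - x) * f y ^ q := fun y => by
      rw [ENNReal.mul_rpow_of_nonneg _ _ hq0.le, ← ENNReal.rpow_mul, one_div_mul_cancel hq0.ne',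
        ENNReal.rpow_one]
    simp only [e1, e2, e3] at h1
    rw [lintegral_sub_right_eq_self k x] at h1
    calc _ ≤ ((∫⁻ z, k z) ^ (1 / q') * (∫⁻ y, k (y - x) * f y ^ q) ^ (1 / q)) ^ q := by
          gcongr
      _ = _ := by
          rw [ENNReal.mul_rpow_of_nonneg _ _ hq0.le, ← ENNReal.rpow_mul, ← ENNReal.rpow_mul,
            one_div_mul_cancel hq0.ne', ENNReal.rpow_one]
          congr 2
          have : 1 / q' = 1 - 1 / q := by linarith
          rw [this, sub_mul, one_div_mul_cancel hq0.ne', one_mul]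
  have hm2 : Measurable (fun p : Euc n × Euc n => k (p.2 - p.1) * f p.2 ^ q) :=
    (hk.comp (measurable_snd.sub measurable_fst)).mul ((hf.comp measurable_snd).pow_const _)
  calc _ ≤ ∫⁻ x, (∫⁻ z, k z) ^ (q - 1) * ∫⁻ y, k (y - x) * f y ^ q := lintegral_mono hpt
    _ = (∫⁻ z, k z) ^ (q - 1) * ∫⁻ x, ∫⁻ y, k (y - x) * f y ^ q :=
        lintegral_const_mul _ hm2.lintegral_prod_right'
    _ = (∫⁻ z, k z) ^ (q - 1) * ∫⁻ y, (∫⁻ z, k z) * f y ^ q := by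
        rw [lintegral_lintegral_swap hm2.aemeasurable]
        congr 2 with y
        rw [lintegral_mul_const _ (show Measurable fun x => k (y - x) from
          hk.comp (measurable_id.const_sub y)),
          lintegral_sub_left_eq_self k y]
    _ = _ := by
        rw [lintegral_const_mul _ (hf.pow_const _), ← mul_assoc]
        congr 1
        nth_rewrite 2 [← ENNReal.rpow_one (∫⁻ z, k z)]
        rw [← ENNReal.rpow_add_of_nonneg _ _ (by linarith [hq.lt]) zero_le_one]
        congr 1
        ring

/-- The kernel `‖z‖ ^ (-n)` on an annulus: the source of the logarithm, and of the factor `ω_{n-1}`,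
in the exponential estimate. -/
lemma log_kernel {n : ℕ} (hn : 1 ≤ n) {ε R : ℝ} (hε : 0 < ε) (hR : ε ≤ R) :
    ∫⁻ z : Euc n, ENNReal.ofReal ((Ico ε R).indicator (fun r => r ^ (-(n : ℝ))) ‖z‖) =
      ENNReal.ofReal (sphereArea n * log (R / ε)) := by
  have : Nonempty (Fin n) := ⟨⟨0, hn⟩⟩
  have : Nontrivial (Euc n) := inferInstance
  have hdim : Module.finrank ℝ (Euc n) = n := by simp
  set φ : ℝ → ℝ := (Ico ε R).indicator (fun r => r ^ (-(n : ℝ))) with hφ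
  have e : ∀ r : ℝ, r ^ (n - 1) * φ r = (Ico ε R).indicator (fun r => r⁻¹) r := fun r => by
    by_cases hr : r ∈ Ico ε R
    · rw [hφ, indicator_of_mem hr, indicator_of_mem hr]
      have hr0 : 0 < r := hε.trans_le hr.1
      have : ((n - 1 : ℕ) : ℝ) = (n : ℝ) - 1 := by push_cast [hn]; ring
      rw [← Real.rpow_natCast, ← Real.rpow_add hr0, this, ← Real.rpow_neg_one]
      ring_nf
    · rw [hφ, indicator_of_notMem hr, indicator_of_notMem hr, mul_zero]
  have hint : IntegrableOn (fun r : ℝ => r⁻¹) (Ico ε R) := by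
    rw [integrableOn_Ico_iff_integrableOn_Ioo, ← intervalIntegrable_iff_integrableOn_Ioo_of_le hR]
    exact intervalIntegrable_inv_iff.2 (Or.inr (by
      rw [uIcc_of_le hR]; exact fun h => absurd h.1 (not_le.2 hε)))
  have hI : Integrable (fun z : Euc n => φ ‖z‖) := by
    rw [integrable_fun_norm_addHaar, hdim]
    simp only [smul_eq_mul, e]
    exact (hint.integrable_indicator measurableSet_Ico).integrableOn
  have hpos : ∀ z : Euc n, 0 ≤ φ ‖z‖ := fun z => by
    rw [hφ]; exact indicator_nonneg (fun r hr => by have := hε.trans_le hr.1; positivity) _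
  rw [← ofReal_integral_eq_lintegral_ofReal hI (Eventually.of_forall hpos),
    integral_fun_norm_addHaar, hdim]
  simp only [smul_eq_mul, e, nsmul_eq_mul]
  rw [← mul_assoc, sphereArea_eq hn, setIntegral_indicator measurableSet_Ico,
    inter_eq_right.2 (show Ico ε R ⊆ Ioi 0 from fun r hr => hε.trans_le hr.1), integral_Ico_eq_integral_Ioc,
    ← intervalIntegral.integral_of_le hR, integral_inv_of_pos hε (hε.trans_le hR)]

/-- Splitting of the Riesz potential at radius `ε`: the near part loses `ε ^ σ` against a milder
kernel, the far part is estimated sharply by Hölder's inequality. -/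
lemma potential_split {n : ℕ} (hn : 1 ≤ n) {a σ ε R : ℝ} (ha : 0 < a) (han : a < n)
    (hσ : 0 < σ) (hε : 0 < ε) (hR : ε ≤ R) {f : Euc n → ℝ≥0∞} (hf : Measurable f)
    (hf1 : ∫⁻ y, f y ^ ((n : ℝ) / a) ≤ 1) (x : Euc n) (hfx : ∀ y, R ≤ ‖y - x‖ → f y = 0) :
    ∫⁻ y, ENNReal.ofReal (‖y - x‖ ^ (a - n)) * f y ≤
      ENNReal.ofReal (ε ^ σ) *
        (∫⁻ y, (ball (0 : Euc n) R).indicator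
          (fun z => ENNReal.ofReal (‖z‖ ^ (a - σ - n))) (y - x) * f y) +
      ENNReal.ofReal ((sphereArea n * log (R / ε)) ^ (((n : ℝ) - a) / n)) := by
  have hn0 : (0 : ℝ) < n := by exact_mod_cast hn
  have hna : 0 < (n : ℝ) - a := by linarith
  have hq : ((n : ℝ) / (n - a)).HolderConjugate ((n : ℝ) / a) := by
    rw [Real.holderConjugate_iff]
    constructor
    · rw [lt_div_iff₀ hna]; linarith
    · rw [inv_div, inv_div]; field_simp; ring
  set k : Euc n → ℝ≥0∞ := (ball (0 : Euc n) R).indicator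
    (fun z => ENNReal.ofReal (‖z‖ ^ (a - σ - n))) with hk
  set φ : ℝ → ℝ := (Ico ε R).indicator (fun r => r ^ (-(n : ℝ))) with hφ
  have hφm : Measurable φ := (measurable_id.pow_const _).indicator measurableSet_Ico
  set h : Euc n → ℝ≥0∞ := fun z => ENNReal.ofReal (φ ‖z‖) ^ (((n : ℝ) - a) / n) with hh
  have hhm : Measurable h := ((hφm.comp measurable_norm).ennreal_ofReal).pow_const _
  have hkm : Measurable k :=
    ((measurable_norm.pow_const _).ennreal_ofReal).indicator measurableSet_ball
  have hpt : ∀ y, ENNReal.ofReal (‖y - x‖ ^ (a - n)) * f y ≤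
      ENNReal.ofReal (ε ^ σ) * (k (y - x) * f y) + h (y - x) * f y := fun y => by
    rcases le_or_gt R ‖y - x‖ with h1 | h1
    · simp [hfx y h1]
    rcases lt_or_ge ‖y - x‖ ε with h2 | h2
    · refine le_add_right ?_
      rw [← mul_assoc]
      gcongr
      rw [hk, indicator_of_mem (by simpa using h1), ← ENNReal.ofReal_mul (by positivity)]
      refine ENNReal.ofReal_le_ofReal ?_
      rcases (norm_nonneg (y - x)).eq_or_lt with h0 | h0
      · rw [← h0, Real.zero_rpow (by linarith)]; positivity
      · rw [show a - n = σ + (a - σ - n) by ring, Real.rpow_add h0]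
        gcongr
    · refine le_add_left ?_
      gcongr
      have hp : 0 < ‖y - x‖ := hε.trans_le h2
      rw [hh, hφ]
      simp only
      rw [indicator_of_mem (show ‖y - x‖ ∈ Ico ε R from ⟨h2, h1⟩),
        ENNReal.ofReal_rpow_of_nonneg (by positivity) (by positivity), ← Real.rpow_mul hp.le]
      refine ENNReal.ofReal_le_ofReal (le_of_eq ?_)
      congr 1
      field_simp
      ring
  have hfar : ∫⁻ y, h (y - x) * f y ≤
      ENNReal.ofReal ((sphereArea n * log (R / ε)) ^ (((n : ℝ) - a) / n)) := by
    have h1 := ENNReal.lintegral_mul_le_Lp_mul_Lq volume hq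
      (f := fun y => h (y - x)) (g := f)
      (hhm.comp (measurable_id.sub_const x)).aemeasurable hf.aemeasurable
    have e1 : ∀ z, h z ^ ((n : ℝ) / (n - a)) = ENNReal.ofReal (φ ‖z‖) := fun z => by
      rw [hh, ← ENNReal.rpow_mul, show ((n : ℝ) - a) / n * (n / (n - a)) = 1 by field_simp,
        ENNReal.rpow_one]
    simp only [e1, Pi.mul_apply] at h1
    rw [lintegral_sub_right_eq_self (fun z : Euc n => ENNReal.ofReal (φ ‖z‖)) x, hφ,
      log_kernel hn hε hR, one_div_div] at h1
    refine h1.trans ?_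
    have hl : 0 ≤ sphereArea n * log (R / ε) :=
      mul_nonneg (sphereArea_pos hn).le (log_nonneg ((one_le_div hε).2 hR))
    rw [ENNReal.ofReal_rpow_of_nonneg hl (by positivity)]
    calc _ ≤ ENNReal.ofReal ((sphereArea n * log (R / ε)) ^ (((n : ℝ) - a) / n)) * 1 := by
          gcongr
          exact ENNReal.rpow_le_one hf1 (by positivity)
      _ = _ := mul_one _
  calc _ ≤ ∫⁻ y, (ENNReal.ofReal (ε ^ σ) * (k (y - x) * f y) + h (y - x) * f y) :=
        lintegral_mono hpt
    _ = ENNReal.ofReal (ε ^ σ) * (∫⁻ y, k (y - x) * f y) + ∫⁻ y, h (y - x) * f y := by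
        have m1 : Measurable fun y => k (y - x) * f y :=
          (hkm.comp (measurable_id.sub_const x)).mul hf
        rw [lintegral_add_left (m1.const_mul _), lintegral_const_mul _ m1]
    _ ≤ _ := by gcongr

/-- Subcritical exponential integrability of Riesz potentials, with Adams' sharp threshold
`n / ω_{n-1}` for the exponent `β`. -/
lemma potential_exp {n : ℕ} (hn : 1 ≤ n) {a β : ℝ} (ha : 0 < a) (han : a < n) (hβ : 0 < β)
    (hβn : β * sphereArea n < n) {Ω : Set (Euc n)} (hΩm : MeasurableSet Ω)
    (hΩ : Bornology.IsBounded Ω) :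
    ∃ C : ℝ≥0∞, C ≠ ⊤ ∧ ∀ f : Euc n → ℝ≥0∞, Measurable f → (∀ y, y ∉ Ω → f y = 0) →
      ∫⁻ y, f y ^ ((n : ℝ) / a) ≤ 1 → ∀ W : Euc n → ℝ,
      (∀ x ∈ Ω, ENNReal.ofReal |W x| ≤ ∫⁻ y, ENNReal.ofReal (‖y - x‖ ^ (a - n)) * f y) →
      ∫⁻ x in Ω, ENNReal.ofReal (exp (β * |W x| ^ ((n : ℝ) / (n - a)))) ≤ C := by
  have hn0 : (0 : ℝ) < n := by exact_mod_cast hn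
  have hna : 0 < (n : ℝ) - a := by linarith
  have hω := sphereArea_pos hn
  set ω := sphereArea n with hωdef
  have hq : ((n : ℝ) / a).HolderConjugate ((n : ℝ) / (n - a)) := by
    rw [Real.holderConjugate_iff]
    constructor
    · rw [lt_div_iff₀ ha]; linarith
    · rw [inv_div, inv_div]; field_simp; ring
  have hq0 := hq.pos
  have hq'0 := hq.symm.pos
  obtain ⟨K, hK1, hKn⟩ : ∃ K : ℝ, 1 < K ∧ β * ω * K < n := by
    have : 1 < n / (β * ω) := by rw [lt_div_iff₀ (by positivity)]; linarith
    obtain ⟨K, h1, h2⟩ := exists_between this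
    refine ⟨K, h1, ?_⟩
    rw [lt_div_iff₀ (by positivity)] at h2
    linarith
  have hK0 : 0 < K := by linarith
  -- With this choice of `σ` the final power of `1 + k ⋆ f` is exactly `n / a`.
  set σ := a * (β * ω * K / n) with hσdef
  have hσ : 0 < σ := by positivity
  have hσa : σ < a := by
    have : β * ω * K / n < 1 := by rw [div_lt_one hn0]; exact hKn
    rw [hσdef]; nlinarith
  obtain ⟨R0, hR0⟩ := hΩ.subset_ball (0 : Euc n)
  set R := 2 * max R0 1 with hRdef
  have hR : 0 < R := by have := le_max_right R0 1; linarith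
  have hdist : ∀ x ∈ Ω, ∀ y ∈ Ω, ‖y - x‖ < R := fun x hx y hy => by
    have h1 := mem_ball_zero_iff.1 (hR0 hx)
    have h2 := mem_ball_zero_iff.1 (hR0 hy)
    have h3 := norm_sub_le y x
    have h4 := le_max_left R0 1
    linarith
  obtain ⟨D, hD0, hD⟩ := pow_split hq'0 hK1
  obtain ⟨D2, hD20, hD2⟩ := pow_split hq0 (one_lt_two)
  set k : Euc n → ℝ≥0∞ := (ball (0 : Euc n) R).indicator
    (fun z => ENNReal.ofReal (‖z‖ ^ (a - σ - n))) with hk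
  have hkm : Measurable k :=
    ((measurable_norm.pow_const _).ennreal_ofReal).indicator measurableSet_ball
  have hkfin : ∫⁻ z, k z ≠ ⊤ := by
    rw [hk, lintegral_indicator measurableSet_ball]
    have := (integrableOn_kernel hn (s := a - σ - n) (by linarith) R).lintegral_lt_top
    exact this.ne
  set M := ENNReal.ofReal (exp (β * (D * (R ^ σ) ^ ((n : ℝ) / (n - a))))) with hM
  refine ⟨M * (2 * volume Ω + ENNReal.ofReal D2 * (∫⁻ z, k z) ^ ((n : ℝ) / a)), ?_, ?_⟩
  · have h1 : volume Ω ≠ ⊤ := hΩ.measure_lt_top.ne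
    have h2 : (∫⁻ z, k z) ^ ((n : ℝ) / a) ≠ ⊤ := ENNReal.rpow_ne_top_of_nonneg hq0.le hkfin
    exact ENNReal.mul_ne_top ENNReal.ofReal_ne_top (ENNReal.add_ne_top.2
      ⟨ENNReal.mul_ne_top (by simp) h1, ENNReal.mul_ne_top ENNReal.ofReal_ne_top h2⟩)
  intro f hf hfΩ hf1 W hW
  set g : Euc n → ℝ≥0∞ := fun x => ∫⁻ y, k (y - x) * f y with hg
  have hpt : ∀ x ∈ Ω, ENNReal.ofReal (exp (β * |W x| ^ ((n : ℝ) / (n - a)))) ≤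
      M * (2 + ENNReal.ofReal D2 * g x ^ ((n : ℝ) / a)) := fun x hx => by
    rcases eq_or_ne (D2) 0 with hD2z | hD2z
    · -- The constant `D2` cannot vanish, since `(0 + b) ^ r ≤ D2 b ^ r`.
      have := hD2 0 1 le_rfl zero_le_one
      simp [hD2z, Real.zero_rpow hq0.ne'] at this
      linarith
    rcases eq_or_ne (g x) ⊤ with hgx | hgx
    · rw [hgx, ENNReal.top_rpow_of_pos hq0, ENNReal.mul_top (by
        simpa using lt_of_le_of_ne hD20 hD2z.symm), add_top, ENNReal.mul_top (by
        rw [hM]; simpa using exp_pos _)]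
      exact le_top
    set t := (g x).toReal with ht
    have ht0 : 0 ≤ t := ENNReal.toReal_nonneg
    have hgt : g x = ENNReal.ofReal t := (ENNReal.ofReal_toReal hgx).symm
    have h1t : 0 < 1 + t := by linarith
    -- The splitting radius is chosen so that the near part stays below `R ^ σ`.
    set ε := R * (1 + t) ^ (-(1 / σ)) with hε
    have hε0 : 0 < ε := by positivity
    have hεR : ε ≤ R := by
      have : (1 + t) ^ (-(1 / σ)) ≤ 1 :=
        Real.rpow_le_one_of_one_le_of_nonpos (by linarith) (by simp; positivity)
      rw [hε]; nlinarith
    have hsp := (hW x hx).trans (potential_split hn ha han hσ hε0 hεR hf hf1 x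
      (fun y hy => hfΩ y (fun hy' => absurd (hdist x hx y hy') (not_lt.2 hy))))
    have hεσ : ε ^ σ = R ^ σ / (1 + t) := by
      rw [hε, Real.mul_rpow hR.le (by positivity), ← Real.rpow_mul h1t.le,
        show -(1 / σ) * σ = -1 by field_simp, Real.rpow_neg_one, div_eq_mul_inv]
    have hlog : sphereArea n * log (R / ε) = ω / σ * log (1 + t) := by
      have : R / ε = (1 + t) ^ (1 / σ) := by
        rw [hε, Real.rpow_neg h1t.le]; field_simp
      rw [this, Real.log_rpow h1t]; ring
    have hl0 : 0 ≤ log (1 + t) := log_nonneg (by linarith)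
    rw [hlog] at hsp
    change _ ≤ ENNReal.ofReal (ε ^ σ) * g x + _ at hsp
    rw [hgt, ← ENNReal.ofReal_mul (by positivity), ← ENNReal.ofReal_add (by positivity)
      (by positivity), ENNReal.ofReal_le_ofReal_iff (by positivity)] at hsp
    have hnear : ε ^ σ * t ≤ R ^ σ := by
      rw [hεσ, div_mul_eq_mul_div, div_le_iff₀ h1t]
      have : 0 < R ^ σ := by positivity
      nlinarith
    have hWq : |W x| ^ ((n : ℝ) / (n - a)) ≤
        K * (ω / σ * log (1 + t)) + D * (R ^ σ) ^ ((n : ℝ) / (n - a)) := by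
      calc _ ≤ ((ω / σ * log (1 + t)) ^ (((n : ℝ) - a) / n) + R ^ σ) ^ ((n : ℝ) / (n - a)) := by
            gcongr; linarith
        _ ≤ _ := hD _ _ (by positivity) (by positivity)
        _ = _ := by
            rw [← Real.rpow_mul (by positivity),
              show ((n : ℝ) - a) / n * (n / (n - a)) = 1 by field_simp, Real.rpow_one]
    have hexp : exp (β * |W x| ^ ((n : ℝ) / (n - a))) ≤
        exp (β * (D * (R ^ σ) ^ ((n : ℝ) / (n - a)))) * (2 + D2 * t ^ ((n : ℝ) / a)) := by
      calc _ ≤ exp (β * (D * (R ^ σ) ^ ((n : ℝ) / (n - a))) + log (1 + t) * (n / a)) := by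
            refine exp_le_exp.2 ((mul_le_mul_of_nonneg_left hWq hβ.le).trans (le_of_eq ?_))
            rw [hσdef]
            field_simp
            ring
        _ = exp (β * (D * (R ^ σ) ^ ((n : ℝ) / (n - a)))) * (1 + t) ^ ((n : ℝ) / a) := by
            rw [exp_add, Real.rpow_def_of_pos h1t]
        _ ≤ _ := by
            gcongr
            have := hD2 1 t zero_le_one ht0
            rwa [Real.one_rpow, mul_one] at this
    refine (ENNReal.ofReal_le_ofReal hexp).trans (le_of_eq ?_)
    rw [ENNReal.ofReal_mul (exp_pos _).le, ENNReal.ofReal_add (by norm_num) (by positivity),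
      ENNReal.ofReal_mul hD20, hgt, ENNReal.ofReal_rpow_of_nonneg ht0 hq0.le, ENNReal.ofReal_ofNat]
  have hy := young_one hq hkm hf
  calc _ ≤ ∫⁻ x in Ω, M * (2 + ENNReal.ofReal D2 * g x ^ ((n : ℝ) / a)) :=
        setLIntegral_mono' hΩm hpt
    _ = M * (2 * volume Ω + ENNReal.ofReal D2 * ∫⁻ x in Ω, g x ^ ((n : ℝ) / a)) := by
        rw [lintegral_const_mul' _ _ ENNReal.ofReal_ne_top, lintegral_add_left measurable_const,
          lintegral_const_mul' _ _ ENNReal.ofReal_ne_top, setLIntegral_const]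
    _ ≤ _ := by
        gcongr
        calc _ ≤ ∫⁻ x, g x ^ ((n : ℝ) / a) := setLIntegral_le_lintegral _ _
          _ ≤ _ := hy
          _ ≤ (∫⁻ z, k z) ^ ((n : ℝ) / a) * 1 := by gcongr
          _ = _ := mul_one _

/-! ### Subcritical Adams inequality -/

/-- Subcritical Adams inequality: for each exponent `β < adamsConst n m` there is a uniform bound,
normalised by any `s` dominating the `m`-th order energy of `w`. -/
lemma adams_sub {n m : ℕ} (hm : 1 ≤ m) (hnm : 2 * m ≤ n) {Ω : Set (Euc n)}
    (hΩm : MeasurableSet Ω) (hΩ : Bornology.IsBounded Ω) {β : ℝ} (hβ : 0 < β)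
    (hβζ : β < adamsConst n m) :
    ∃ C : ℝ≥0∞, C ≠ ⊤ ∧ ∀ w : Euc n → ℝ, IsCcSmooth Ω w → ∀ s : ℝ, 0 < s →
      ∫ x in Ω, mGradNorm n m w x ^ ((n : ℝ) / m) ≤ s →
      ∫⁻ x in Ω, ENNReal.ofReal
        (exp (β * (|w x| ^ ((n : ℝ) / (n - m)) / s ^ ((m : ℝ) / (n - m))))) ≤ C := by
  have hn : 1 ≤ n := by omega
  have hm0 : (0 : ℝ) < m := by exact_mod_cast hm
  have hn0 : (0 : ℝ) < n := by exact_mod_cast hn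
  have hmn : (m : ℝ) < n := by exact_mod_cast (by omega : m < n)
  have hnm0 : (0 : ℝ) < n - m := by linarith
  have hc : 0 < repConst n m := repConst_pos hm (by omega)
  have hω := sphereArea_pos hn
  set c := repConst n m with hcdef
  have hcq : 0 < c ^ ((n : ℝ) / (n - m)) := by positivity
  rw [adamsConst_eq, ← hcdef, div_mul_eq_mul_div, lt_div_iff₀ hω] at hβζ
  obtain ⟨C, hC, h⟩ := potential_exp hn hm0 hmn (β := β / c ^ ((n : ℝ) / (n - m)))
    (by positivity) (by rw [div_mul_eq_mul_div, div_lt_iff₀ hcq]; exact hβζ) hΩm hΩ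
  refine ⟨C, hC, fun w hw s hs hws => ?_⟩
  have hsm : 0 < s ^ ((m : ℝ) / n) := by positivity
  have hG := mGradNorm_continuous (m := m) hw
  have hG0 := mGradNorm_nonneg n m w
  have key := h (fun y => ENNReal.ofReal (mGradNorm n m w y / s ^ ((m : ℝ) / n)))
    (hG.div_const _).measurable.ennreal_ofReal
    (fun y hy => by simp [mGradNorm_support hw hy]) ?_ (fun x => c * w x / s ^ ((m : ℝ) / n)) ?_
  · refine le_trans (le_of_eq ?_) key
    congr 1 with x
    congr 2
    rw [abs_div, abs_mul, abs_of_pos hc, abs_of_pos hsm, Real.div_rpow (by positivity) hsm.le,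
      Real.mul_rpow hc.le (abs_nonneg _), ← Real.rpow_mul hs.le,
      show (m : ℝ) / n * (n / (n - m)) = m / (n - m) by field_simp]
    field_simp
  · have e : ∀ y, ENNReal.ofReal (mGradNorm n m w y / s ^ ((m : ℝ) / n)) ^ ((n : ℝ) / m) =
        ENNReal.ofReal (mGradNorm n m w y ^ ((n : ℝ) / m) / s) := fun y => by
      rw [ENNReal.ofReal_rpow_of_nonneg (div_nonneg (hG0 y) hsm.le) (by positivity),
        Real.div_rpow (hG0 y) hsm.le, ← Real.rpow_mul hs.le,
        show (m : ℝ) / n * (n / m) = 1 by field_simp, Real.rpow_one]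
    have hz : Ω.indicator (fun y => ENNReal.ofReal (mGradNorm n m w y ^ ((n : ℝ) / m) / s)) =
        fun y => ENNReal.ofReal (mGradNorm n m w y ^ ((n : ℝ) / m) / s) := by
      rw [indicator_eq_self]
      intro y hy
      by_contra hyΩ
      refine hy ?_
      simp [mGradNorm_support hw hyΩ, Real.zero_rpow (by positivity : (n : ℝ) / m ≠ 0)]
    have hcs : HasCompactSupport fun y => mGradNorm n m w y ^ ((n : ℝ) / m) :=
      (mGradNorm_compact hw).comp_left (g := fun t : ℝ => t ^ ((n : ℝ) / m))
        (Real.zero_rpow (by positivity))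
    have hint : Integrable fun y => mGradNorm n m w y ^ ((n : ℝ) / m) :=
      (hG.rpow_const fun _ => Or.inr (by positivity)).integrable_of_hasCompactSupport hcs
    simp only [e]
    rw [← hz, lintegral_indicator hΩm,
      ← ofReal_integral_eq_lintegral_ofReal (hint.integrableOn.div_const s)
        (Eventually.of_forall fun y => div_nonneg (Real.rpow_nonneg (hG0 y) _) hs.le),
      integral_div]
    exact ENNReal.ofReal_le_one.2 ((div_le_one hs).2 hws)
  · intro x _
    have hr := rep_bound hm hnm hw x
    rw [abs_div, abs_mul, abs_of_pos hc, abs_of_pos hsm, div_eq_mul_inv,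
      ENNReal.ofReal_mul (by positivity)]
    calc _ ≤ (∫⁻ y : Euc n, ENNReal.ofReal (‖y - x‖ ^ ((m : ℝ) - n)) *
          ENNReal.ofReal (mGradNorm n m w y)) * ENNReal.ofReal (s ^ ((m : ℝ) / n))⁻¹ := by gcongr
      _ = _ := by
        rw [← lintegral_mul_const' _ _ ENNReal.ofReal_ne_top]
        congr 1 with y
        rw [mul_assoc, ← ENNReal.ofReal_mul (hG0 y), ← div_eq_mul_inv]

/-- The factor `2 ^ (1 - θ)` is the concavity defect of `t ↦ t ^ θ`. -/
lemma rpow_add_le_two {θ a b : ℝ} (hθ0 : 0 ≤ θ) (hθ1 : θ ≤ 1) (ha : 0 ≤ a) (hb : 0 ≤ b) :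
    a ^ θ + b ^ θ ≤ 2 ^ (1 - θ) * (a + b) ^ θ := by
  have h := (Real.concaveOn_rpow hθ0 hθ1).2 (mem_Ici.2 ha) (mem_Ici.2 hb)
    (by norm_num : (0 : ℝ) ≤ 1 / 2) (by norm_num : (0 : ℝ) ≤ 1 / 2) (by norm_num)
  simp only [smul_eq_mul] at h
  rw [show 1 / 2 * a + 1 / 2 * b = (a + b) / 2 by ring, Real.div_rpow (by positivity) (by norm_num)]
    at h
  rw [Real.rpow_sub (by norm_num), Real.rpow_one]
  calc _ = 2 * (1 / 2 * a ^ θ + 1 / 2 * b ^ θ) := by ring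
    _ ≤ 2 * ((a + b) ^ θ / 2 ^ θ) := by gcongr
    _ = _ := by ring

lemma IsCcSmooth.exists_abs_le {n : ℕ} {Ω : Set (Euc n)} {g : Euc n → ℝ} (hg : IsCcSmooth Ω g) :
    ∃ B : ℝ, ∀ x, |g x| ≤ B :=
  hg.2.1.exists_bound_of_continuous hg.1.continuous

lemma IsCcSmooth.sub' {n : ℕ} {Ω : Set (Euc n)} {g h : Euc n → ℝ} (hg : IsCcSmooth Ω g)
    (hh : IsCcSmooth Ω h) : IsCcSmooth Ω (fun y => g y - h y) :=
  ⟨hg.1.sub hh.1, hg.2.1.sub hh.2.1,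
    (tsupport_sub g h).trans (union_subset hg.2.2 hh.2.2)⟩

/-- A sequence in `ℝ≥0∞` with finite terms that is eventually bounded is bounded. -/
lemma exists_bound_of_eventually {J : ℕ → ℝ≥0∞} {C : ℝ≥0∞} (hC : C ≠ ⊤) (hJ : ∀ k, J k ≠ ⊤)
    (h : ∀ᶠ k in atTop, J k ≤ C) : ∃ B : ℝ, ∀ k, J k ≤ ENNReal.ofReal B := by
  obtain ⟨N, hN⟩ := eventually_atTop.1 h
  have hs : ∑ k ∈ Finset.range N, J k ≠ ⊤ := ENNReal.sum_ne_top.2 fun k _ => hJ k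
  refine ⟨(C + ∑ k ∈ Finset.range N, J k).toReal, fun k => ?_⟩
  rw [ENNReal.ofReal_toReal (ENNReal.add_ne_top.2 ⟨hC, hs⟩)]
  rcases le_or_gt N k with hk | hk
  · exact le_add_right (hN k hk)
  · exact le_add_left (Finset.single_le_sum (f := J) (fun _ _ => zero_le) (Finset.mem_range.2 hk))

lemma exp_mul_max_le {t X Y : ℝ} : exp (t * max X Y) ≤ exp (t * X) + exp (t * Y) := by
  rcases le_total X Y with h | h
  · rw [max_eq_right h]; linarith [exp_pos (t * X)]
  · rw [max_eq_left h]; linarith [exp_pos (t * Y)]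

end

/-! ### Concentration-compactness in the product space -/

open Filter Topology in
/-- Lions-type concentration-compactness lemma in the product space. -/
theorem product_lions_lemma
    (n m : ℕ) (hm : 1 ≤ m) (hnm : 2 * m ≤ n)
    (Ω : Set (EuclideanSpace ℝ (Fin n))) (hΩo : IsOpen Ω) (hΩb : Bornology.IsBounded Ω)
    (U V : ℕ → EuclideanSpace ℝ (Fin n) → ℝ) (u v : EuclideanSpace ℝ (Fin n) → ℝ)
    (hU : ∀ k, IsCcSmooth Ω (U k)) (hV : ∀ k, IsCcSmooth Ω (V k))
    (hu : IsCcSmooth Ω u) (hv : IsCcSmooth Ω v)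
    (hne : ¬ (u = 0 ∧ v = 0))
    (hnorm : ∀ k,
      (∫ x in Ω, mGradNorm n m (U k) x ^ ((n : ℝ) / (m : ℝ))) +
        (∫ x in Ω, mGradNorm n m (V k) x ^ ((n : ℝ) / (m : ℝ))) = 1)
    (hconvU : ∀ᵐ x ∂(volume.restrict Ω), Tendsto (fun k => U k x) atTop (𝓝 (u x)))
    (hconvV : ∀ᵐ x ∂(volume.restrict Ω), Tendsto (fun k => V k x) atTop (𝓝 (v x)))
    (hlim : Tendsto (fun k =>
        (∫ x in Ω, mGradNorm n m (fun y => U k y - u y) x ^ ((n : ℝ) / (m : ℝ))) +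
          (∫ x in Ω, mGradNorm n m (fun y => V k y - v y) x ^ ((n : ℝ) / (m : ℝ))))
      atTop
      (𝓝 (1 - ((∫ x in Ω, mGradNorm n m u x ^ ((n : ℝ) / (m : ℝ))) +
        (∫ x in Ω, mGradNorm n m v x ^ ((n : ℝ) / (m : ℝ))))))) :
    ∀ p : ℝ, 0 < p →
      p * (1 - (∫ x in Ω, mGradNorm n m u x ^ ((n : ℝ) / (m : ℝ)))
            - (∫ x in Ω, mGradNorm n m v x ^ ((n : ℝ) / (m : ℝ))))
              ^ ((m : ℝ) / ((n : ℝ) - (m : ℝ)))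
        < adamsConst n m /
            (2 : ℝ) ^ (((n : ℝ) - 2 * (m : ℝ)) / ((n : ℝ) - (m : ℝ))) →
      ∃ C : ℝ, ∀ k,
        (∫⁻ x in Ω, ENNReal.ofReal
            (Real.exp (p * (|U k x| ^ ((n : ℝ) / ((n : ℝ) - (m : ℝ))) +
              |V k x| ^ ((n : ℝ) / ((n : ℝ) - (m : ℝ))))))) ≤ ENNReal.ofReal C := by
  intro p hp hpζ
  have hn0 : (0 : ℝ) < n := by exact_mod_cast (by omega : 0 < n)
  have hm0 : (0 : ℝ) < m := by exact_mod_cast hm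
  have h2mn : 2 * (m : ℝ) ≤ n := by exact_mod_cast hnm
  have hnm0 : (0 : ℝ) < n - m := by linarith
  set θ : ℝ := (m : ℝ) / (n - m) with hθ
  set q : ℝ := (n : ℝ) / (n - m) with hq
  have hθ0 : 0 < θ := by positivity
  have hθ1 : θ ≤ 1 := (div_le_one hnm0).2 (by linarith)
  have hq0 : 0 < q := by positivity
  have hexp : ((n : ℝ) - 2 * m) / (n - m) = 1 - θ := by rw [hθ]; field_simp; ring
  have hE0 : ∀ g : Euc n → ℝ, 0 ≤ ∫ x in Ω, mGradNorm n m g x ^ ((n : ℝ) / m) := fun g =>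
    integral_nonneg fun x => Real.rpow_nonneg (mGradNorm_nonneg n m g x) _
  rw [sub_sub, hexp, lt_div_iff₀ (by positivity)] at hpζ
  set L := 1 - ((∫ x in Ω, mGradNorm n m u x ^ ((n : ℝ) / m)) +
    ∫ x in Ω, mGradNorm n m v x ^ ((n : ℝ) / m)) with hL
  have hL0 : 0 ≤ L := ge_of_tendsto' hlim fun k => add_nonneg (hE0 _) (hE0 _)
  -- The strict inequality leaves room to enlarge `L` to `T` and to insert a factor `K > 1`.
  obtain ⟨T, hTζ, hTL⟩ : ∃ T : ℝ, p * T ^ θ * 2 ^ (1 - θ) < adamsConst n m ∧ L < T := by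
    have hc : ContinuousAt (fun T : ℝ => p * T ^ θ * 2 ^ (1 - θ)) L :=
      ((continuousAt_id.rpow_const (Or.inr hθ0.le)).const_mul p).mul_const _
    have h1 : ∀ᶠ T in 𝓝[>] L, p * T ^ θ * 2 ^ (1 - θ) < adamsConst n m :=
      (hc.eventually_lt_const hpζ).filter_mono nhdsWithin_le_nhds
    exact (h1.and self_mem_nhdsWithin).exists
  have hT0 : 0 < T := hL0.trans_lt hTL
  obtain ⟨K, hK1, hKζ⟩ : ∃ K : ℝ, 1 < K ∧ K * (p * T ^ θ * 2 ^ (1 - θ)) < adamsConst n m := by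
    have h0 : 0 < p * T ^ θ * 2 ^ (1 - θ) := by positivity
    obtain ⟨K, h1, h2⟩ := exists_between ((one_lt_div h0).2 hTζ)
    exact ⟨K, h1, (lt_div_iff₀ h0).1 h2⟩
  have hK0 : 0 < K := by linarith
  set β := K * (p * T ^ θ * 2 ^ (1 - θ)) with hβ
  obtain ⟨C, hC, hadams⟩ := adams_sub hm hnm hΩo.measurableSet hΩb
    (by positivity : 0 < β) hKζ
  obtain ⟨D, hD0, hD⟩ := pow_split hq0 hK1
  obtain ⟨Bu, hBu⟩ := hu.exists_abs_le
  obtain ⟨Bv, hBv⟩ := hv.exists_abs_le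
  have hBu0 : 0 ≤ Bu := (abs_nonneg _).trans (hBu 0)
  have hBv0 : 0 ≤ Bv := (abs_nonneg _).trans (hBv 0)
  refine exists_bound_of_eventually
    (C := ENNReal.ofReal (exp (p * (D * Bu ^ q + D * Bv ^ q))) * (C + C))
    (ENNReal.mul_ne_top ENNReal.ofReal_ne_top (ENNReal.add_ne_top.2 ⟨hC, hC⟩)) (fun k => ?_) ?_
  · obtain ⟨B, hB⟩ := (hU k).exists_abs_le
    obtain ⟨B', hB'⟩ := (hV k).exists_abs_le
    refine ne_top_of_le_ne_top (b := ENNReal.ofReal (exp (p * (B ^ q + B' ^ q))) * volume Ω)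
      (ENNReal.mul_ne_top ENNReal.ofReal_ne_top hΩb.measure_lt_top.ne) ?_
    rw [← setLIntegral_const]
    refine lintegral_mono fun x => ENNReal.ofReal_le_ofReal ?_
    gcongr
    · exact hB x
    · exact hB' x
  · have hδ : 0 < (T - L) / 4 := by linarith
    filter_upwards [hlim.eventually_lt_const (show L < L + (T - L) / 2 by linarith)] with k hk
    set w := fun y => U k y - u y with hw
    set z := fun y => V k y - v y with hz
    have hws : IsCcSmooth Ω w := (hU k).sub' hu
    have hzs : IsCcSmooth Ω z := (hV k).sub' hv
    -- Adding a positive margin avoids dividing by a vanishing energy.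
    set a := (∫ x in Ω, mGradNorm n m w x ^ ((n : ℝ) / m)) + (T - L) / 4 with ha
    set b := (∫ x in Ω, mGradNorm n m z x ^ ((n : ℝ) / m)) + (T - L) / 4 with hb
    have ha0 : 0 < a := add_pos_of_nonneg_of_pos (hE0 _) hδ
    have hb0 : 0 < b := add_pos_of_nonneg_of_pos (hE0 _) hδ
    have hab : a + b ≤ T := by linarith
    have hθab : a ^ θ + b ^ θ ≤ 2 ^ (1 - θ) * T ^ θ :=
      (rpow_add_le_two hθ0.le hθ1 ha0.le hb0.le).trans (by gcongr)
    have hWa := hadams w hws a ha0 (by linarith)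
    have hZb := hadams z hzs b hb0 (by linarith)
    have hsplit : ∀ {g h : Euc n → ℝ} {B : ℝ}, (∀ x, |h x| ≤ B) → ∀ x,
        |g x| ^ q ≤ K * |g x - h x| ^ q + D * B ^ q := fun {g h B} hB x => by
      calc |g x| ^ q ≤ (|g x - h x| + |h x|) ^ q := by
            gcongr
            simpa using abs_add_le (g x - h x) (h x)
        _ ≤ K * |g x - h x| ^ q + D * |h x| ^ q := hD _ _ (abs_nonneg _) (abs_nonneg _)
        _ ≤ _ := by gcongr; exact hB x
    have hpt : ∀ x, ENNReal.ofReal (exp (p * (|U k x| ^ q + |V k x| ^ q))) ≤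
        ENNReal.ofReal (exp (p * (D * Bu ^ q + D * Bv ^ q))) *
          (ENNReal.ofReal (exp (β * (|w x| ^ q / a ^ θ))) +
            ENNReal.ofReal (exp (β * (|z x| ^ q / b ^ θ)))) := fun x => by
      set X := |w x| ^ q / a ^ θ with hX
      set Y := |z x| ^ q / b ^ θ with hY
      have hX0 : 0 ≤ X := by positivity
      have hwX : |w x| ^ q = a ^ θ * X := by rw [hX]; field_simp
      have hzY : |z x| ^ q = b ^ θ * Y := by rw [hY]; field_simp
      have hM0 : 0 ≤ max X Y := hX0.trans (le_max_left _ _)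
      have hmain : |w x| ^ q + |z x| ^ q ≤ 2 ^ (1 - θ) * T ^ θ * max X Y := by
        calc |w x| ^ q + |z x| ^ q ≤ a ^ θ * max X Y + b ^ θ * max X Y := by
              rw [hwX, hzY]
              gcongr
              · exact le_max_left _ _
              · exact le_max_right _ _
          _ = (a ^ θ + b ^ θ) * max X Y := by ring
          _ ≤ _ := by gcongr
      have h1 : p * (|U k x| ^ q + |V k x| ^ q) ≤
          p * (D * Bu ^ q + D * Bv ^ q) + β * max X Y := by
        calc _ ≤ p * ((K * |w x| ^ q + D * Bu ^ q) + (K * |z x| ^ q + D * Bv ^ q)) := by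
              gcongr
              · exact hsplit hBu x
              · exact hsplit hBv x
          _ = p * (D * Bu ^ q + D * Bv ^ q) + p * K * (|w x| ^ q + |z x| ^ q) := by ring
          _ ≤ p * (D * Bu ^ q + D * Bv ^ q) +
              p * K * (2 ^ (1 - θ) * T ^ θ * max X Y) := by gcongr
          _ = _ := by rw [hβ]; ring
      rw [← ENNReal.ofReal_add (exp_pos _).le (exp_pos _).le, ← ENNReal.ofReal_mul (exp_pos _).le]
      refine ENNReal.ofReal_le_ofReal ?_
      calc _ ≤ exp (p * (D * Bu ^ q + D * Bv ^ q) + β * max X Y) := exp_le_exp.2 h1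
        _ = exp (p * (D * Bu ^ q + D * Bv ^ q)) * exp (β * max X Y) := exp_add _ _
        _ ≤ _ := by gcongr; exact exp_mul_max_le
    have hwm : Measurable fun x => ENNReal.ofReal (exp (β * (|w x| ^ q / a ^ θ))) := by
      have := hws.1.continuous.measurable
      exact ((((this.abs).pow_const q).div_const _).const_mul β).exp.ennreal_ofReal
    calc _ ≤ ∫⁻ x in Ω, ENNReal.ofReal (exp (p * (D * Bu ^ q + D * Bv ^ q))) *
          (ENNReal.ofReal (exp (β * (|w x| ^ q / a ^ θ))) +
            ENNReal.ofReal (exp (β * (|z x| ^ q / b ^ θ)))) := lintegral_mono hpt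
      _ = ENNReal.ofReal (exp (p * (D * Bu ^ q + D * Bv ^ q))) *
          ((∫⁻ x in Ω, ENNReal.ofReal (exp (β * (|w x| ^ q / a ^ θ)))) +
            ∫⁻ x in Ω, ENNReal.ofReal (exp (β * (|z x| ^ q / b ^ θ)))) := by
          rw [lintegral_const_mul' _ _ ENNReal.ofReal_ne_top, lintegral_add_left hwm]
      _ ≤ _ := by gcongr
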